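/- Let q be a prime power, F_q the finite field with q elements, and let s ≥ 1 and d ≥ 1 be integers with s ≤ d and d ≤ √q. Let P be the set of polynomials f ∈ F_q[X_1, …, X_s, Y_1, …, Y_s] whose total degree in the variables X_1, …, X_s is at most d and whose total degree in the variables Y_1, …, Y_s is at most d. For f ∈ P and U ⊆ F_q^s, let N_f(U) = {v ∈ F_q^s : f(u, v) = 0 for all u ∈ U}. Let M = Σ_{r=1}^{d} M_r, where M_r is the number of surjective functions from a d-element set onto an r-element set. Then for every set U ⊆ F_q^s of size s, Σ_{f ∈ P} |N_f(U)|^d ≤ M · |P|; that is, the d-th moment of |N_f(U)| for a uniformly random f ∈ P is at most M. -/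

import Mathlib

/-!
The power `|N_f(U)|^d` counts the `d`-tuples `v` of points of `F^s` such that `f` vanishes on
`U × im v`. Exchanging the two sums, it is enough to count, for each tuple `v`, the `f ∈ P`
vanishing on `U × W`, where `W = im v`.

As `|U|` and `|W|` are at most `d`, Lagrange interpolation in the `X`- and in the `Y`-variables
separately (`exists_lagrange`) puts the indicator function of every point of `U × W` in `P`, so
that the vanishing conditions are independent: at most `|P| / q^(s |W|)` polynomials satisfy them
(`card_vanishing_mul_le`). On the other hand, at most `M_r (q^s)^r` tuples have exactly `r` distinct
entries (`card_tuples_le`). The powers of `q` cancel, so the tuples with `r` distinct entries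
contribute at most `M_r |P|`, and `1 ≤ r ≤ d`.
-/

open MvPolynomial

/-- The set of polynomials in the `2s` variables `X₁,…,X_s,Y₁,…,Y_s` whose total
degree in the `X`-variables is at most `d` and whose total degree in the
`Y`-variables is at most `d`. -/
def PolySet (F : Type*) [CommSemiring F] (s d : ℕ) :
    Set (MvPolynomial (Fin s ⊕ Fin s) F) :=
  {f | ∀ m ∈ f.support,
    (∑ i : Fin s, m (Sum.inl i)) ≤ d ∧ (∑ i : Fin s, m (Sum.inr i)) ≤ d}

/-- The common neighborhood of `U` in the bipartite graph associated to `f`: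
the set of `v` with `f(u,v) = 0` for all `u ∈ U`, as a `Finset`. -/
noncomputable def commonNbhd {F : Type*} [Field F] [Fintype F] {s : ℕ}
    (f : MvPolynomial (Fin s ⊕ Fin s) F) (U : Finset (Fin s → F)) :
    Finset (Fin s → F) :=
  open Classical in
  Finset.univ.filter (fun v => ∀ u ∈ U, eval (Sum.elim u v) f = 0)

/-- `M_r`: the number of surjections from a `d`-element set onto an
`r`-element set. -/
noncomputable def numSurj (d r : ℕ) : ℕ :=
  (Finset.univ.filter (fun g : Fin d → Fin r => Function.Surjective g)).card

/-- Lagrange interpolation on a finite set `W` of points of `F^s`: each indicator function is the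
restriction of a polynomial of total degree less than `|W|`. -/
lemma exists_lagrange {F : Type*} [Field F] [DecidableEq F] {s : ℕ} (W : Finset (Fin s → F))
    (w : Fin s → F) (hw : w ∈ W) :
    ∃ p : MvPolynomial (Fin s) F, p.totalDegree ≤ W.card - 1 ∧
      ∀ w' ∈ W, eval w' p = if w' = w then 1 else 0 := by
  -- A coordinate separating `w` from `w'` gives an affine factor vanishing at `w'` and equal to
  -- `1` at `w`.
  have key : ∀ w' : Fin s → F, ∃ l : MvPolynomial (Fin s) F, l.totalDegree ≤ 1 ∧
      (w' ≠ w → eval w' l = 0 ∧ eval w l = 1) := by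
    intro w'
    by_cases h : w' = w
    · exact ⟨0, by simp, fun h' => absurd h h'⟩
    · obtain ⟨j, hj⟩ := Function.ne_iff.mp h
      refine ⟨C ((w j - w' j)⁻¹) * (X j - C (w' j)), ?_, fun _ => ⟨by simp, ?_⟩⟩
      · refine (totalDegree_mul _ _).trans ?_
        rw [totalDegree_C, zero_add]
        refine (totalDegree_sub_C_le _ _).trans ?_
        simp
      · have : w j - w' j ≠ 0 := sub_ne_zero.mpr (Ne.symm hj)
        simp [this]
  choose l hl1 hl2 using key
  refine ⟨∏ w' ∈ W.erase w, l w', ?_, ?_⟩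
  · refine (totalDegree_finsetProd _ _).trans ?_
    refine (Finset.sum_le_sum fun w' _ => hl1 w').trans ?_
    simp [Finset.card_erase_of_mem hw]
  · intro w' hw'
    rw [map_prod]
    split_ifs with h
    · subst h
      exact Finset.prod_eq_one fun x hx => (hl2 x (Finset.ne_of_mem_erase hx)).2
    · exact Finset.prod_eq_zero (Finset.mem_erase.mpr ⟨h, hw'⟩) (hl2 w' h).1

lemma rename_mul_rename_mem {F : Type*} [Field F] {s d : ℕ} {p r : MvPolynomial (Fin s) F}
    (hp : p.totalDegree ≤ d) (hr : r.totalDegree ≤ d) :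
    rename Sum.inl p * rename Sum.inr r ∈ PolySet F s d := by
  classical
  intro m hm
  obtain ⟨a, ha, b, hb, rfl⟩ := Finset.mem_add.mp (support_mul _ _ hm)
  rw [support_rename_of_injective Sum.inl_injective] at ha
  rw [support_rename_of_injective Sum.inr_injective] at hb
  obtain ⟨a, ha', rfl⟩ := Finset.mem_image.mp ha
  obtain ⟨b, hb', rfl⟩ := Finset.mem_image.mp hb
  have h1 := (le_totalDegree ha').trans hp
  have h2 := (le_totalDegree hb').trans hr
  rw [Finsupp.sum_fintype _ _ (by simp)] at h1 h2
  have e1 : ∀ i : Fin s, Finsupp.mapDomain (Sum.inl : Fin s → Fin s ⊕ Fin s) a (Sum.inr i) = 0 :=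
    fun i => Finsupp.mapDomain_of_notMem_range _ _ (by simp)
  have e2 : ∀ i : Fin s, Finsupp.mapDomain (Sum.inr : Fin s → Fin s ⊕ Fin s) b (Sum.inl i) = 0 :=
    fun i => Finsupp.mapDomain_of_notMem_range _ _ (by simp)
  simp only [Finsupp.add_apply, e1, e2, Finsupp.mapDomain_apply Sum.inl_injective,
    Finsupp.mapDomain_apply Sum.inr_injective, add_zero, zero_add]
  exact ⟨h1, h2⟩

lemma polySet_add_mem {F : Type*} [Field F] {s d : ℕ} {f g : MvPolynomial (Fin s ⊕ Fin s) F}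
    (hf : f ∈ PolySet F s d) (hg : g ∈ PolySet F s d) : f + g ∈ PolySet F s d := by
  classical
  intro m hm
  rcases Finset.mem_union.mp (support_add hm) with h | h
  exacts [hf m h, hg m h]

lemma polySet_sum_mem {F : Type*} [Field F] {s d : ℕ} {ι : Type*} (t : Finset ι) (c : ι → F)
    (g : ι → MvPolynomial (Fin s ⊕ Fin s) F) (hg : ∀ i, g i ∈ PolySet F s d) :
    ∑ i ∈ t, c i • g i ∈ PolySet F s d := by
  classical
  refine Finset.sum_induction _ (· ∈ PolySet F s d) (fun _ _ => polySet_add_mem) ?_ ?_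
  · intro m hm
    simp at hm
  · exact fun i _ m hm => hg i m (support_smul hm)

lemma polySet_finite (F : Type*) [Field F] [Fintype F] (s d : ℕ) : (PolySet F s d).Finite := by
  classical
  -- Every exponent vector of a polynomial in `P` is bounded coordinatewise by `d`.
  let B : (Fin s ⊕ Fin s) →₀ ℕ := Finsupp.equivFunOnFinite.symm fun _ => d
  have hB : Finite (Set.Iic B) := Set.finite_Iic B
  refine Set.finite_coe_iff.mp (Finite.of_injective
    (fun (f : PolySet F s d) (m : Set.Iic B) => coeff m.1 f.1) ?_)
  intro f g hfg
  have hz : ∀ h : PolySet F s d, ∀ m, m ∉ Set.Iic B → coeff m h.1 = 0 := by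
    intro h m hm
    by_contra hne
    obtain ⟨h1, h2⟩ := h.2 m (mem_support_iff.mpr hne)
    refine hm fun i => ?_
    rcases i with i | i
    · exact (Finset.single_le_sum (f := fun i => m (Sum.inl i))
        (fun _ _ => Nat.zero_le _) (Finset.mem_univ i)).trans h1
    · exact (Finset.single_le_sum (f := fun i => m (Sum.inr i))
        (fun _ _ => Nat.zero_le _) (Finset.mem_univ i)).trans h2
  refine Subtype.ext (MvPolynomial.ext _ _ fun m => ?_)
  by_cases hm : m ∈ Set.Iic B
  · exact congrFun hfg ⟨m, hm⟩
  · rw [hz f m hm, hz g m hm]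

/-- The `|U| |W|` vanishing conditions on `U × W` are independent on `P`: translating a solution
`f` by a combination of the Lagrange polynomials of `U × W` yields elements of `P`, and both `f`
and the coefficients are recovered from the result by evaluating it on `U × W`. -/
lemma card_vanishing_mul_le {F : Type*} [Field F] [Fintype F] {s d : ℕ}
    (P : Finset (MvPolynomial (Fin s ⊕ Fin s) F)) (hP : ∀ f, f ∈ P ↔ f ∈ PolySet F s d)
    (U W : Finset (Fin s → F)) (hU : U.card ≤ d) (hW : W.card ≤ d)
    [DecidablePred fun f : MvPolynomial (Fin s ⊕ Fin s) F =>
      ∀ u ∈ U, ∀ w ∈ W, eval (Sum.elim u w) f = 0] :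
    (P.filter fun f => ∀ u ∈ U, ∀ w ∈ W, eval (Sum.elim u w) f = 0).card *
      Fintype.card F ^ (U.card * W.card) ≤ P.card := by
  classical
  choose a ha1 ha2 using fun u : U => exists_lagrange U u.1 u.2
  choose b hb1 hb2 using fun w : W => exists_lagrange W w.1 w.2
  let g : U × W → MvPolynomial (Fin s ⊕ Fin s) F :=
    fun x => rename Sum.inl (a x.1) * rename Sum.inr (b x.2)
  have hg : ∀ x, g x ∈ PolySet F s d := fun x =>
    rename_mul_rename_mem ((ha1 _).trans (by omega)) ((hb1 _).trans (by omega))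
  have hev : ∀ x y : U × W, eval (Sum.elim y.1.1 y.2.1) (g x) = if y = x then 1 else 0 := by
    rintro ⟨u, w⟩ ⟨u', w'⟩
    simp only [g, map_mul, eval_rename, Sum.elim_comp_inl, Sum.elim_comp_inr,
      ha2 u u'.1 u'.2, hb2 w w'.1 w'.2, Prod.mk.injEq, Subtype.ext_iff]
    split_ifs <;> simp_all
  have hcard : Fintype.card F ^ (U.card * W.card) =
      (Finset.univ : Finset (U × W → F)).card := by
    simp
  rw [hcard, ← Finset.card_product]
  refine Finset.card_le_card_of_injOn (fun x => x.1 + ∑ i, x.2 i • g i) ?_ ?_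
  · rintro ⟨f, c⟩ hx
    simp only [Finset.coe_product, Set.mem_prod, Finset.mem_coe, Finset.mem_filter] at hx
    exact (hP _).mpr (polySet_add_mem ((hP _).mp hx.1.1) (polySet_sum_mem _ _ _ hg))
  · have hrec : ∀ f, (∀ u ∈ U, ∀ w ∈ W, eval (Sum.elim u w) f = 0) → ∀ (c : U × W → F) y,
        eval (Sum.elim y.1.1 y.2.1) (f + ∑ i, c i • g i) = c y := by
      intro f hf c y
      simp [map_sum, smul_eval, hev, hf y.1.1 y.1.2 y.2.1 y.2.2]
    rintro ⟨f, c⟩ hx ⟨f', c'⟩ hx' h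
    simp only [Finset.coe_product, Set.mem_prod, Finset.mem_coe, Finset.mem_filter] at hx hx'
    dsimp only at h
    have hc : c = c' := by
      funext y
      rw [← hrec f hx.1.2 c y, h, hrec f' hx'.1.2 c' y]
    subst hc
    rw [add_right_cancel h]

/-- A `d`-tuple with exactly `r` distinct entries is a surjection onto `Fin r` followed by an
enumeration of its entries. -/
lemma card_tuples_le {V : Type*} [Fintype V] [DecidableEq V] (d r : ℕ) :
    (Finset.univ.filter fun v : Fin d → V => (Finset.univ.image v).card = r).card ≤
      numSurj d r * Fintype.card V ^ r := by
  classical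
  have hcard : Fintype.card V ^ r = (Finset.univ : Finset (Fin r → V)).card := by simp
  unfold numSurj
  rw [hcard, ← Finset.card_product]
  refine (Finset.card_le_card ?_).trans
    (Finset.card_image_le (f := fun x : (Fin d → Fin r) × (Fin r → V) => x.2 ∘ x.1))
  intro v hv
  rw [Finset.mem_filter] at hv
  let e := Finset.equivFinOfCardEq hv.2
  have hmem : ∀ i, v i ∈ Finset.univ.image v := fun i =>
    Finset.mem_image_of_mem _ (Finset.mem_univ i)
  refine Finset.mem_image.mpr ⟨(fun i => e ⟨v i, hmem i⟩, fun j => (e.symm j).1), ?_, ?_⟩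
  · simp only [Finset.mem_product, Finset.mem_filter, Finset.mem_univ, true_and, and_true]
    intro j
    obtain ⟨i, -, hi⟩ := Finset.mem_image.mp (e.symm j).2
    refine ⟨i, ?_⟩
    rw [← e.eq_symm_apply]
    exact Subtype.ext hi
  · funext i
    simp

lemma commonNbhd_card_pow {F : Type*} [Field F] [Fintype F] [DecidableEq F] {s : ℕ} (d : ℕ)
    (f : MvPolynomial (Fin s ⊕ Fin s) F) (U : Finset (Fin s → F)) :
    (commonNbhd f U).card ^ d = ∑ v : Fin d → Fin s → F,
      if ∀ u ∈ U, ∀ w ∈ Finset.univ.image v, eval (Sum.elim u w) f = 0 then 1 else 0 := by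
  classical
  rw [← Finset.card_filter]
  have : (commonNbhd f U).card ^ d = (Fintype.piFinset fun _ : Fin d => commonNbhd f U).card := by
    simp
  rw [this]
  congr 1
  ext v
  simp only [Fintype.mem_piFinset, commonNbhd, Finset.mem_filter, Finset.mem_univ, true_and,
    Finset.mem_image, forall_exists_index, forall_apply_eq_imp_iff]
  exact ⟨fun h u hu i => h i u hu, fun h i u hu => h u hu i⟩

/-- The `d`-th moment bound: for `1 ≤ s ≤ d ≤ √q` and any `U` of size `s`,
`Σ_{f ∈ P} |N_f(U)|^d ≤ M · |P|` where `M = Σ_{r=1}^{d} M_r`. -/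
theorem moment_bound (F : Type*) [Field F] [Fintype F]
    (s d : ℕ) (hs : 1 ≤ s) (hd : 1 ≤ d) (hsd : s ≤ d)
    (hdq : (d : ℝ) ≤ Real.sqrt (Fintype.card F))
    (U : Finset (Fin s → F)) (hU : U.card = s) :
    ∑ᶠ f ∈ PolySet F s d, (commonNbhd f U).card ^ d
      ≤ (∑ r ∈ Finset.Icc 1 d, numSurj d r) * (PolySet F s d).ncard := by
  classical
  have hfin := polySet_finite F s d
  rw [finsum_mem_eq_finite_toFinset_sum _ hfin, Set.ncard_eq_toFinset_card _ hfin]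
  set P := hfin.toFinset with hPdef
  have hP : ∀ f, f ∈ P ↔ f ∈ PolySet F s d := fun f => hfin.mem_toFinset
  simp_rw [commonNbhd_card_pow]
  rw [Finset.sum_comm]
  simp_rw [← Finset.card_filter]
  have hmaps : ∀ v ∈ (Finset.univ : Finset (Fin d → Fin s → F)),
      (Finset.univ.image v).card ∈ Finset.Icc 1 d := by
    intro v _
    refine Finset.mem_Icc.mpr ⟨Finset.card_pos.mpr ?_, ?_⟩
    · exact ⟨v ⟨0, hd⟩, Finset.mem_image_of_mem _ (Finset.mem_univ _)⟩
    · simpa using Finset.card_image_le (s := Finset.univ) (f := v)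
  rw [← Finset.sum_fiberwise_of_maps_to hmaps, Finset.sum_mul]
  refine Finset.sum_le_sum fun r hr => ?_
  have hq : 0 < Fintype.card F ^ (s * r) := pow_pos Fintype.card_pos _
  -- Scaling by `q^(s r)` replaces the division in the bound on the number of vanishing `f`.
  refine Nat.le_of_mul_le_mul_right ?_ hq
  rw [Finset.sum_mul]
  calc _ ≤ ∑ v : Fin d → Fin s → F with (Finset.univ.image v).card = r, P.card := by
        refine Finset.sum_le_sum fun v hv => ?_
        have hv' := (Finset.mem_filter.mp hv).2
        have := card_vanishing_mul_le P hP U (Finset.univ.image v) (by omega)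
          (Finset.mem_Icc.mp (hmaps v (Finset.mem_univ _))).2
        rwa [hU, hv'] at this
    _ ≤ numSurj d r * Fintype.card (Fin s → F) ^ r * P.card := by
        rw [Finset.sum_const, smul_eq_mul]
        exact Nat.mul_le_mul_right _ (card_tuples_le d r)
    _ = numSurj d r * P.card * Fintype.card F ^ (s * r) := by
        rw [Fintype.card_fun, Fintype.card_fin, pow_mul]
        ring
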